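/- Let m = Σ_k n_k l_k and let N = ⊕_k (M_{n_k} ⊗ ℂ1_{l_k}) ⊆ M_m be the corresponding block-diagonal unital *-subalgebra. Then −log λ(M_m : N) = D(M_m‖N) = log Σ_k min(l_k, n_k) · l_k, and D_cb(M_m‖N) = log Σ_k l_k². -/

import Mathlib

open scoped ENNReal Classical ComplexOrder
open Matrix

noncomputable section

namespace GJL

variable {n : Type*} [Fintype n] [DecidableEq n]

/-- `Mat n` is the matrix *-algebra with rows and columns indexed by `n`. -/
abbrev Mat (n : Type*) [Fintype n] [DecidableEq n] := Matrix n n ℂ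

/-- A density matrix: positive semidefinite with trace one. -/
def IsDensity (ρ : Mat n) : Prop := ρ.PosSemidef ∧ ρ.trace = 1

/-- The real part of the (matrix) trace. -/
def traceR (A : Mat n) : ℝ := (A.trace).re

/-- Real matrix powers via the continuous functional calculus.  For positive
semidefinite matrices and negative exponents this is the generalized inverse
power on the support, since `(0 : ℝ) ^ r = 0` for `r ≠ 0`. -/
def mpow (A : Mat n) (r : ℝ) : Mat n := cfc (fun x : ℝ => x ^ r) A

/-- Matrix logarithm on the support (`Real.log 0 = 0`). -/
def mlog (A : Mat n) : Mat n := cfc Real.log A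

/-- Schatten `p`-norm `(Tr ((x* x)^(p/2)))^(1/p)`. -/
def snorm (p : ℝ) (x : Mat n) : ℝ := (traceR (mpow (xᴴ * x) (p/2))) ^ (1/p)

/-- Operator norm `‖x‖_∞`. -/
def opNorm (x : Mat n) : ℝ := ‖(Matrix.toEuclideanCLM (𝕜 := ℂ) x : EuclideanSpace ℂ n →L[ℂ] EuclideanSpace ℂ n)‖

/-- The support projection of `ρ` is dominated by that of `σ` (for positive
semidefinite matrices: `ker σ ⊆ ker ρ`). -/
def suppLe (ρ σ : Mat n) : Prop := ∀ v, σ.mulVec v = 0 → ρ.mulVec v = 0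

/-- `e` is the support projection of `ρ`. -/
def IsSupportProj (ρ e : Mat n) : Prop :=
  e.IsHermitian ∧ e * e = e ∧ ∀ v, e.mulVec v = 0 ↔ ρ.mulVec v = 0

/-- `D_∞(ρ‖σ) = log min {λ ≥ 0 | ρ ≤ λ σ}`, `⊤` if no such `λ` exists. -/
def Dinf (ρ σ : Mat n) : EReal :=
  if ∃ c : ℝ, 0 ≤ c ∧ (c • σ - ρ).PosSemidef then
    ((Real.log (sInf {c : ℝ | 0 ≤ c ∧ (c • σ - ρ).PosSemidef}) : ℝ) : EReal)
  else ⊤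

/-- Umegaki relative entropy `D(ρ‖σ) = Tr(ρ log ρ - ρ log σ)`, `⊤` if the
support condition fails. -/
def DU (ρ σ : Mat n) : EReal :=
  if suppLe ρ σ then ((traceR (ρ * mlog ρ - ρ * mlog σ) : ℝ) : EReal) else ⊤

/-- The sandwiched matrix `σ^{(1-p)/(2p)} ρ σ^{(1-p)/(2p)}`; note that for
`p > 1` the exponent `(1-p)/(2p)` equals `-1/(2p')` with `1/p + 1/p' = 1`. -/
def sandwich (p : ℝ) (ρ σ : Mat n) : Mat n :=
  mpow σ ((1 - p)/(2*p)) * ρ * mpow σ ((1 - p)/(2*p))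

/-- The sandwiched Rényi relative entropy `D_p(ρ‖σ)` for `p ∈ [1/2, ∞]`:
for `p ∈ (1,∞)` it is `p' log ‖σ^{-1/(2p')} ρ σ^{-1/(2p')}‖_p
= (p-1)⁻¹ log Tr ((σ^{-1/(2p')} ρ σ^{-1/(2p')})^p)` when the support of `ρ` is
dominated by that of `σ` and `⊤` otherwise; for `p ∈ [1/2, 1)` it is
`(p-1)⁻¹ log Tr ((σ^{(1-p)/(2p)} ρ σ^{(1-p)/(2p)})^p)` (`⊤` when the trace
vanishes, i.e. when the honest value is `+∞`); `D_1` is the Umegaki relative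
entropy and `D_∞` the max-relative entropy. -/
def Dp (p : ℝ≥0∞) (ρ σ : Mat n) : EReal :=
  if p = ⊤ then Dinf ρ σ
  else if p = 1 then DU ρ σ
  else if 1 < p.toReal ∧ ¬ suppLe ρ σ then ⊤
  else if traceR (mpow (sandwich p.toReal ρ σ) p.toReal) = 0 then ⊤
  else (((p.toReal - 1)⁻¹ * Real.log (traceR (mpow (sandwich p.toReal ρ σ) p.toReal)) : ℝ) : EReal)

/-- `D_p(ρ‖S) = inf { D_p(ρ‖σ) | σ a density in S }`. -/
def DpSet (p : ℝ≥0∞) (ρ : Mat n) (S : Set (Mat n)) : EReal :=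
  ⨅ σ ∈ {σ ∈ S | IsDensity σ}, Dp p ρ σ

/-- `D_p(A‖S) = sup { D_p(ρ‖S) | ρ a density in A }`. -/
def DpRel (p : ℝ≥0∞) (A S : Set (Mat n)) : EReal :=
  ⨆ ρ ∈ {ρ ∈ A | IsDensity ρ}, DpSet p ρ S

open scoped Kronecker in
/-- The algebraic tensor product `N₁ ⊗ N₂ ⊆ M_{n₁} ⊗ M_{n₂} = M_{n₁ × n₂}`,
realized as the linear span of Kronecker products. -/
def tensorSpan {n₁ n₂ : Type*} [Fintype n₁] [DecidableEq n₁] [Fintype n₂] [DecidableEq n₂]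
    (N₁ : Set (Mat n₁)) (N₂ : Set (Mat n₂)) : Set (Mat (n₁ × n₂)) :=
  ↑(Submodule.span ℂ {z : Mat (n₁ × n₂) | ∃ x ∈ N₁, ∃ y ∈ N₂, z = x ⊗ₖ y})

/-- `D_{p,cb}(M‖N) = sup_k D_p(M_k ⊗ M ‖ M_k ⊗ N)`. -/
def DpCb (p : ℝ≥0∞) (N : Set (Mat n)) : EReal :=
  ⨆ k : ℕ, DpRel p Set.univ (tensorSpan (Set.univ : Set (Mat (Fin k))) N)

/-- `E` is the trace preserving conditional expectation onto `N`, i.e. the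
orthogonal projection onto `N` with respect to the Hilbert–Schmidt inner
product `⟨x,y⟩ = Tr(x* y)`. -/
def IsCondExp (N : Set (Mat n)) (E : Mat n →ₗ[ℂ] Mat n) : Prop :=
  (∀ x, E x ∈ N) ∧ (∀ x ∈ N, E x = x) ∧
    ∀ x y, y ∈ N → ((E x)ᴴ * y).trace = (xᴴ * y).trace

/-- The Pimsner–Popa index constant
`λ(M:N) = max {c ≥ 0 | c x ≤ E(x) for all x ≥ 0}`. -/
def ppIndex (E : Mat n →ₗ[ℂ] Mat n) : ℝ :=
  sSup {c : ℝ | 0 ≤ c ∧ ∀ x : Mat n, x.PosSemidef → (E x - c • x).PosSemidef}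

/-- von Neumann entropy `H(ρ) = -Tr(ρ log ρ)`. -/
def vnEntropy (ρ : Mat n) : ℝ := - traceR (ρ * mlog ρ)

/-- The amplification `id_{M_k} ⊗ Φ` acting on `M_k ⊗ M_n = M_{k × n}`,
applying `Φ` blockwise. -/
def ampFun (k : Type*) [Fintype k] [DecidableEq k] (Φ : Mat n →ₗ[ℂ] Mat n)
    (X : Mat (k × n)) : Mat (k × n) :=
  Matrix.of fun a b => Φ (Matrix.of fun s t => X (a.1, s) (b.1, t)) a.2 b.2

/-- Complete positivity: all amplifications `id_{M_k} ⊗ Φ` preserve positive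
semidefiniteness. -/
def IsCP (Φ : Mat n →ₗ[ℂ] Mat n) : Prop :=
  ∀ (k : ℕ) (X : Mat (Fin k × n)), X.PosSemidef → (ampFun (Fin k) Φ X).PosSemidef

/-- Completely positive and trace preserving. -/
def IsCPTP (Φ : Mat n →ₗ[ℂ] Mat n) : Prop :=
  IsCP Φ ∧ ∀ x : Mat n, (Φ x).trace = x.trace

/-- The block diagonal unital *-subalgebra `⊕_k (M_{n_k} ⊗ ℂ1_{l_k})` inside
`M_m`, `m = Σ_k n_k l_k`, realized on the index set `Σ k, Fin (n k) × Fin (l k)`: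
a matrix lies in it iff it vanishes off the diagonal blocks and its `k`-th
diagonal block is `y_k ⊗ 1_{l_k}` for some `y_k ∈ M_{n_k}`. -/
def blockAlg (K : Type*) [Fintype K] [DecidableEq K] (nn ll : K → ℕ) :
    Set (Mat ((k : K) × (Fin (nn k) × Fin (ll k)))) :=
  {X | ∃ y : (k : K) → Matrix (Fin (nn k)) (Fin (nn k)) ℂ,
    ∀ i j : (k : K) × (Fin (nn k) × Fin (ll k)),
      X i j = if h : i.1 = j.1 then
          y j.1 (Fin.cast (congrArg nn h) i.2.1) j.2.1 *
            (if Fin.cast (congrArg ll h) i.2.2 = j.2.2 then 1 else 0)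
        else 0}

/-!
If `ρ ≤ S • E ρ`, operator monotonicity of the logarithm gives `D(ρ‖E ρ) ≤ log S`. For
`N = ⊕_k M_{m_k} ⊗ ℂ1_{l_k}` the best constant is `S = ∑_k min(l_k, m_k) l_k`. On rank one matrices
the inequality reads `|∑_k tr M_k|² ≤ S ∑_k l_k⁻¹ ‖M_k‖₂²`, where `M_k` is an `l_k × l_k` matrix of
rank at most `min(l_k, m_k)`; it follows from `|tr M|² ≤ rank M * ‖M‖₂²` and Cauchy–Schwarz over the
blocks. A direct sum of maximally entangled vectors, the `k`-th one of weight proportional to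
`min(l_k, m_k) l_k`, shows that both the index and the entropy bound are attained: since
`log x ≤ x - 1`, a pure state `ρ` with `Tr ρσ ≤ 1 / S` satisfies `D(ρ‖σ) ≥ log S`. Amplification by
`M_q` replaces `m_k` by `q m_k`, and `min(l_k, q m_k) = l_k` as soon as `q` is large.
-/

section Trace

lemma traceR_add (A B : Mat n) : traceR (A + B) = traceR A + traceR B := by simp [traceR]

lemma traceR_sub (A B : Mat n) : traceR (A - B) = traceR A - traceR B := by simp [traceR]

lemma traceR_smul (c : ℝ) (A : Mat n) : traceR (c • A) = c * traceR A := by simp [traceR]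

lemma IsDensity.traceR_eq_one {ρ : Mat n} (hρ : IsDensity ρ) : traceR ρ = 1 := by
  simp [traceR, hρ.2]

lemma traceR_vecMulVec_mul (v w : n → ℂ) (A : Mat n) :
    traceR (vecMulVec v (star w) * A) = (star w ⬝ᵥ A *ᵥ v).re := by
  rw [traceR, vecMulVec_mul, trace_vecMulVec, dotProduct_comm, dotProduct_mulVec]

open scoped MatrixOrder in
lemma traceR_mul_nonneg {A B : Mat n} (hA : A.PosSemidef) (hB : B.PosSemidef) :
    0 ≤ traceR (A * B) := by
  obtain ⟨C, rfl⟩ := CStarAlgebra.nonneg_iff_eq_star_mul_self.mp hA.nonneg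
  have hCB : 0 ≤ (C * B * Cᴴ).trace := (hB.mul_mul_conjTranspose_same C).trace_nonneg
  rw [traceR, star_eq_conjTranspose, Matrix.mul_assoc, trace_mul_comm]
  exact (Complex.le_def.mp hCB).1

open scoped MatrixOrder in
lemma traceR_mul_le_traceR_mul {ρ A B : Mat n} (hρ : ρ.PosSemidef) (h : A ≤ B) :
    traceR (ρ * A) ≤ traceR (ρ * B) := by
  rw [← sub_nonneg, ← traceR_sub, ← mul_sub]
  exact traceR_mul_nonneg hρ (Matrix.le_iff.mp h)

lemma isDensity_vecMulVec_star {ψ : n → ℂ} (hψ : star ψ ⬝ᵥ ψ = 1) :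
    IsDensity (vecMulVec ψ (star ψ)) :=
  ⟨posSemidef_vecMulVec_self_star ψ, by rw [trace_vecMulVec, dotProduct_comm, hψ]⟩

end Trace

section Support

lemma continuousOn_spectrum (A : Mat n) (f : ℝ → ℝ) : ContinuousOn f (spectrum ℝ A) :=
  (Matrix.finite_real_spectrum (A := A)).continuousOn f

lemma suppLe_of_posSemidef_smul_sub {ρ σ : Mat n} {S : ℝ} (hρ : ρ.PosSemidef)
    (h : (S • σ - ρ).PosSemidef) : suppLe ρ σ := by
  intro v hv
  rw [← hρ.dotProduct_mulVec_zero_iff]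
  have hneg : 0 ≤ -(star v ⬝ᵥ ρ *ᵥ v) := by
    simpa [Matrix.sub_mulVec, Matrix.smul_mulVec, hv] using h.dotProduct_mulVec_nonneg v
  exact le_antisymm (neg_nonneg.mp hneg) (hρ.dotProduct_mulVec_nonneg v)

lemma mul_eq_zero_of_suppLe {ρ σ A : Mat n} (h : suppLe ρ σ) (hA : σ * A = 0) : ρ * A = 0 := by
  ext i j
  have hcol : σ *ᵥ A.col j = 0 := by
    ext k
    exact congrFun₂ hA k j
  exact congrFun (h _ hcol) i

lemma mul_cfc_indicator_zero_of_suppLe {ρ σ : Mat n} (hσ : σ.IsHermitian) (h : suppLe ρ σ) :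
    ρ * cfc (fun x : ℝ => if x = 0 then 1 else 0) σ = 0 := by
  have hsa : IsSelfAdjoint σ := hσ
  refine mul_eq_zero_of_suppLe h ?_
  nth_rw 1 [← cfc_id' ℝ σ]
  rw [← cfc_mul _ _ _ (continuousOn_spectrum _ _) (continuousOn_spectrum _ _),
    ← cfc_const_zero ℝ σ]
  refine cfc_congr fun x _ => ?_
  by_cases hx : x = 0 <;> simp [hx]

open scoped MatrixOrder in
-- Since `ρ` annihilates the kernel of `σ`, the values of `f` and `g` at `0` do not matter.
lemma traceR_mul_cfc_le_of_suppLe {ρ σ : Mat n} (hρ : ρ.PosSemidef) (hσ : σ.PosSemidef)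
    (h : suppLe ρ σ) {f g : ℝ → ℝ} (hfg : ∀ x, 0 < x → f x ≤ g x) :
    traceR (ρ * cfc f σ) ≤ traceR (ρ * cfc g σ) := by
  set e : ℝ → ℝ := fun x => if x = 0 then 1 else 0
  have hle : cfc f σ ≤ cfc (fun x => g x + (f 0 - g 0) * e x) σ := by
    refine cfc_mono (fun x hx => ?_) (continuousOn_spectrum _ _) (continuousOn_spectrum _ _)
    rcases (spectrum_nonneg_of_nonneg hσ.nonneg hx).eq_or_lt with rfl | hpos
    · simp [e]
    · simpa [e, hpos.ne'] using hfg x hpos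
  refine (traceR_mul_le_traceR_mul hρ hle).trans_eq ?_
  rw [cfc_add _ _ _ (continuousOn_spectrum _ _) (continuousOn_spectrum _ _),
    cfc_const_mul _ _ _ (continuousOn_spectrum _ _), mul_add, Matrix.mul_smul,
    mul_cfc_indicator_zero_of_suppLe hσ.1 h, smul_zero, add_zero]

end Support

section RelativeEntropy

section
open scoped MatrixOrder Matrix.Norms.L2Operator

lemma cfc_log_mul_add {A : Mat n} (hA : A.IsHermitian) (S ε : ℝ) :
    cfc (fun x => Real.log (S * x + ε)) A = CFC.log (S • A + algebraMap ℝ (Mat n) ε) := by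
  have hsa : IsSelfAdjoint A := hA
  rw [CFC.log, cfc_comp' Real.log (fun x => S * x + ε) A
      (((Matrix.finite_real_spectrum (A := A)).image _).continuousOn _) (continuousOn_spectrum _ _),
    cfc_add_const ε (fun x => S * x) A (continuousOn_spectrum _ _),
    cfc_const_mul_id S A]

lemma cfc_log_add_le_cfc_log_mul_add {ρ σ : Mat n} {S ε : ℝ} (hρ : ρ.PosSemidef)
    (hσ : σ.IsHermitian) (h : (S • σ - ρ).PosSemidef) (hε : 0 < ε) :
    cfc (fun x => Real.log (x + ε)) ρ ≤ cfc (fun x => Real.log (S * x + ε)) σ := by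
  have hpos : IsStrictlyPositive (ρ + algebraMap ℝ (Mat n) ε) :=
    (isStrictlyPositive_algebraMap hε).nonneg_add hρ.nonneg
  have hlog : CFC.log (ρ + algebraMap ℝ (Mat n) ε) ≤
      CFC.log (S • σ + algebraMap ℝ (Mat n) ε) :=
    CFC.log_le_log (add_le_add_left (Matrix.le_iff.mpr h) _) hpos
  have hlogρ := cfc_log_mul_add hρ.1 1 ε
  simp only [one_mul, one_smul] at hlogρ
  rwa [hlogρ, cfc_log_mul_add hσ]

end

lemma traceR_mul_mlog_le_traceR_mul_cfc_log_add {ρ : Mat n} (hρ : ρ.PosSemidef) {ε : ℝ}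
    (hε : 0 < ε) : traceR (ρ * mlog ρ) ≤ traceR (ρ * cfc (fun x => Real.log (x + ε)) ρ) :=
  traceR_mul_cfc_le_of_suppLe hρ hρ (fun _ hv => hv) fun _ hx =>
    Real.log_le_log hx (le_add_of_nonneg_right hε.le)

lemma log_mul_add_le {S x ε : ℝ} (hS : 0 < S) (hx : 0 < x) (hε : 0 ≤ ε) :
    Real.log (S * x + ε) ≤ Real.log S + Real.log x + ε / S * x⁻¹ := by
  have hfac : S * x + ε = S * x * (1 + ε / S * x⁻¹) := by field_simp
  rw [hfac, Real.log_mul (by positivity) (by positivity), Real.log_mul hS.ne' hx.ne']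
  linarith [Real.log_le_sub_one_of_pos (show 0 < 1 + ε / S * x⁻¹ by positivity)]

lemma traceR_mul_cfc_log_mul_add_le {ρ σ : Mat n} (hρ : IsDensity ρ) (hσ : σ.PosSemidef)
    (h : suppLe ρ σ) {S ε : ℝ} (hS : 0 < S) (hε : 0 < ε) :
    traceR (ρ * cfc (fun x => Real.log (S * x + ε)) σ) ≤
      Real.log S + traceR (ρ * mlog σ) + ε * (traceR (ρ * mpow σ (-1)) / S) := by
  have hsa : IsSelfAdjoint σ := hσ.1
  calc traceR (ρ * cfc (fun x => Real.log (S * x + ε)) σ)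
      ≤ traceR (ρ * cfc (fun x => Real.log S + Real.log x + ε / S * x ^ (-1 : ℝ)) σ) :=
        traceR_mul_cfc_le_of_suppLe hρ.1 hσ h fun x hx => by
          simpa only [Real.rpow_neg_one] using log_mul_add_le hS hx hε.le
    _ = Real.log S + traceR (ρ * mlog σ) + ε / S * traceR (ρ * mpow σ (-1)) := by
        rw [cfc_add _ _ _ (continuousOn_spectrum _ _) (continuousOn_spectrum _ _),
          cfc_const_add _ _ _ (continuousOn_spectrum _ _),
          cfc_const_mul _ _ _ (continuousOn_spectrum _ _), Algebra.algebraMap_eq_smul_one,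
          mul_add, mul_add, Matrix.mul_smul, Matrix.mul_smul, mul_one, traceR_add, traceR_add,
          traceR_smul, traceR_smul, hρ.traceR_eq_one, mul_one, mlog, mpow]
    _ = _ := by ring

theorem DU_le_log_of_posSemidef_smul_sub {ρ σ : Mat n} (hρ : IsDensity ρ) (hσ : σ.PosSemidef)
    {S : ℝ} (hS : 0 < S) (h : (S • σ - ρ).PosSemidef) : DU ρ σ ≤ (Real.log S : ℝ) := by
  have hsupp := suppLe_of_posSemidef_smul_sub hρ.1 h
  rw [DU, if_pos hsupp, EReal.coe_le_coe_iff, traceR_sub]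
  set c := traceR (ρ * mpow σ (-1)) / S
  have hbound : ∀ ε > 0, traceR (ρ * mlog ρ) - traceR (ρ * mlog σ) ≤ Real.log S + ε * c := by
    intro ε hε
    linarith [traceR_mul_mlog_le_traceR_mul_cfc_log_add hρ.1 hε,
      traceR_mul_le_traceR_mul hρ.1 (cfc_log_add_le_cfc_log_mul_add hρ.1 hσ.1 h hε),
      traceR_mul_cfc_log_mul_add_le hρ hσ hsupp hS hε]
  have hlim : Filter.Tendsto (fun ε => Real.log S + ε * c) (nhdsWithin 0 (Set.Ioi 0))
      (nhds (Real.log S)) :=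
    tendsto_nhdsWithin_of_tendsto_nhds (Continuous.tendsto' (by fun_prop) _ _ (by simp))
  exact ge_of_tendsto hlim (eventually_mem_nhdsWithin.mono hbound)

lemma mlog_eq_zero_of_isIdempotentElem {A : Mat n} (hA : IsIdempotentElem A) :
    mlog A = 0 := by
  rw [mlog, ← cfc_const_zero ℝ A]
  refine cfc_congr fun x hx => ?_
  rcases hA.spectrum_subset ℝ hx with rfl | rfl <;> simp

lemma log_add_traceR_mul_mlog_le {ρ σ : Mat n} (hρ : IsDensity ρ) (hσ : σ.PosSemidef)
    (h : suppLe ρ σ) {S : ℝ} (hS : 0 < S) :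
    Real.log S + traceR (ρ * mlog σ) ≤ S * traceR (ρ * σ) - 1 := by
  have hsa : IsSelfAdjoint σ := hσ.1
  have hle : traceR (ρ * mlog σ) ≤ traceR (ρ * cfc (fun x => -(1 + Real.log S) + S * x) σ) := by
    refine traceR_mul_cfc_le_of_suppLe hρ.1 hσ h fun x hx => ?_
    have hlog := Real.log_le_sub_one_of_pos (mul_pos hS hx)
    rw [Real.log_mul hS.ne' hx.ne'] at hlog
    linarith
  rw [cfc_const_add _ _ _ (continuousOn_spectrum _ _), cfc_const_mul_id S σ,
    Algebra.algebraMap_eq_smul_one, mul_add, Matrix.mul_smul, Matrix.mul_smul, mul_one,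
    traceR_add, traceR_smul, traceR_smul, hρ.traceR_eq_one] at hle
  linarith

theorem log_le_DU_vecMulVec {ψ : n → ℂ} (hψ : star ψ ⬝ᵥ ψ = 1) {σ : Mat n} (hσ : σ.PosSemidef)
    {S : ℝ} (hS : 0 < S) (h : S * (star ψ ⬝ᵥ σ *ᵥ ψ).re ≤ 1) :
    (Real.log S : ℝ) ≤ DU (vecMulVec ψ (star ψ)) σ := by
  have hρ := isDensity_vecMulVec_star hψ
  have hidem : IsIdempotentElem (vecMulVec ψ (star ψ)) := by
    rw [IsIdempotentElem, vecMulVec_mul_vecMulVec, hψ, one_smul]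
  rw [DU]
  split_ifs with hsupp
  · rw [EReal.coe_le_coe_iff, traceR_sub, mlog_eq_zero_of_isIdempotentElem hidem]
    have hgibbs := log_add_traceR_mul_mlog_le hρ hσ hsupp hS
    rw [traceR_vecMulVec_mul ψ ψ σ] at hgibbs
    simp only [mul_zero, traceR, trace_zero, Complex.zero_re] at hgibbs ⊢
    linarith
  · exact le_top

end RelativeEntropy

section ConditionalExpectation

variable {N : Set (Mat n)} {E F : Mat n →ₗ[ℂ] Mat n} {S : ℝ}

lemma IsCondExp.unique (hE : IsCondExp N E) (hF : IsCondExp N F) : E = F := by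
  have horth : ∀ x, ∀ y ∈ N, ((E x - F x)ᴴ * y).trace = 0 := fun x y hy => by
    rw [conjTranspose_sub, sub_mul, trace_sub, hE.2.2 x y hy, hF.2.2 x y hy, sub_self]
  refine LinearMap.ext fun x => ?_
  rw [← sub_eq_zero, ← trace_conjTranspose_mul_self_eq_zero_iff, mul_sub, trace_sub,
    horth x _ (hE.1 x), horth x _ (hF.1 x), sub_self]

lemma IsCondExp.trace_apply (hE : IsCondExp N E) (hN : 1 ∈ N) (X : Mat n) :
    (E X).trace = X.trace := by
  have h := congrArg star (hE.2.2 X 1 hN)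
  rwa [mul_one, mul_one, trace_conjTranspose, trace_conjTranspose, star_star, star_star] at h

/-- `E` satisfies the Pimsner–Popa inequality `X ≤ S • E X` for positive semidefinite `X`. -/
def PimsnerPopaBound (E : Mat n →ₗ[ℂ] Mat n) (S : ℝ) : Prop :=
  ∀ X : Mat n, X.PosSemidef → (S • E X - X).PosSemidef

/-- `ψ` is a unit vector whose pure state satisfies `⟨ψ, σ ψ⟩ ≤ Tr σ / S` for all positive
semidefinite `σ ∈ N`; such a vector witnesses that the index of `N` is at least `S`. -/
def IsIndexWitness (N : Set (Mat n)) (S : ℝ) (ψ : n → ℂ) : Prop :=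
  star ψ ⬝ᵥ ψ = 1 ∧ ∀ σ ∈ N, σ.PosSemidef → S * (star ψ ⬝ᵥ σ *ᵥ ψ).re ≤ traceR σ

open scoped MatrixOrder in
lemma exists_eq_sum_vecMulVec_star {X : Mat n} (hX : X.PosSemidef) :
    ∃ v : n → n → ℂ, X = ∑ i, vecMulVec (v i) (star (v i)) := by
  obtain ⟨B, rfl⟩ := CStarAlgebra.nonneg_iff_eq_star_mul_self.mp hX.nonneg
  refine ⟨fun i => star (B i), ?_⟩
  ext j k
  simp [Matrix.mul_apply, Matrix.sum_apply, vecMulVec_apply, star_eq_conjTranspose]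

lemma pimsnerPopaBound_of_vecMulVec
    (h : ∀ v : n → ℂ, (S • E (vecMulVec v (star v)) - vecMulVec v (star v)).PosSemidef) :
    PimsnerPopaBound E S := by
  intro X hX
  obtain ⟨v, rfl⟩ := exists_eq_sum_vecMulVec_star hX
  rw [map_sum, Finset.smul_sum, ← Finset.sum_sub_distrib]
  exact posSemidef_sum _ fun i _ => h (v i)

lemma PimsnerPopaBound.posSemidef_sub_smul (h : PimsnerPopaBound E S) (hS : 0 < S) {X : Mat n}
    (hX : X.PosSemidef) : (E X - S⁻¹ • X).PosSemidef := by
  have h' := (h X hX).smul (inv_pos.mpr hS).le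
  rwa [smul_sub, inv_smul_smul₀ hS.ne'] at h'

lemma PimsnerPopaBound.posSemidef_apply (h : PimsnerPopaBound E S) (hS : 0 < S) {X : Mat n}
    (hX : X.PosSemidef) : (E X).PosSemidef := by
  simpa using (h.posSemidef_sub_smul hS hX).add (hX.smul (inv_pos.mpr hS).le)

lemma Dp_one (ρ σ : Mat n) : Dp 1 ρ σ = DU ρ σ := by simp [Dp]

theorem PimsnerPopaBound.DpRel_one_le_log (h : PimsnerPopaBound E S) (hE : IsCondExp N E)
    (hN : 1 ∈ N) (hS : 0 < S) : DpRel 1 Set.univ N ≤ (Real.log S : ℝ) := by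
  refine iSup₂_le fun ρ ⟨_, hρ⟩ => ?_
  have hEρ : IsDensity (E ρ) :=
    ⟨h.posSemidef_apply hS hρ.1, (hE.trace_apply hN ρ).trans hρ.2⟩
  refine (iInf₂_le (E ρ) ⟨hE.1 ρ, hEρ⟩).trans ?_
  rw [Dp_one]
  exact DU_le_log_of_posSemidef_smul_sub hρ hEρ.1 hS (h ρ hρ.1)

theorem IsIndexWitness.log_le_DpRel_one {ψ : n → ℂ} (h : IsIndexWitness N S ψ) (hS : 0 < S) :
    (Real.log S : ℝ) ≤ DpRel 1 Set.univ N := by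
  refine le_trans ?_ (le_iSup₂ (vecMulVec ψ (star ψ))
    ⟨Set.mem_univ _, isDensity_vecMulVec_star h.1⟩)
  refine le_iInf₂ fun σ ⟨hσN, hσ⟩ => ?_
  rw [Dp_one]
  exact log_le_DU_vecMulVec h.1 hσ.1 hS ((h.2 σ hσN hσ.1).trans_eq hσ.traceR_eq_one)

theorem IsCondExp.ppIndex_eq_inv {ψ : n → ℂ} (hE : IsCondExp N E) (hN : 1 ∈ N) (hS : 0 < S)
    (hpp : PimsnerPopaBound E S) (hψ : IsIndexWitness N S ψ) : ppIndex E = S⁻¹ := by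
  refine IsGreatest.csSup_eq
    ⟨⟨(inv_pos.mpr hS).le, fun X hX => hpp.posSemidef_sub_smul hS hX⟩, ?_⟩
  rintro c ⟨-, hc⟩
  have hρ := isDensity_vecMulVec_star hψ.1
  set ρ := vecMulVec ψ (star ψ) with hρ_def
  have hquad : star ψ ⬝ᵥ ρ *ᵥ ψ = 1 := by
    rw [hρ_def, vecMulVec_mulVec, hψ.1]
    simpa using hψ.1
  have hlower : c ≤ (star ψ ⬝ᵥ E ρ *ᵥ ψ).re := by
    simpa [Matrix.sub_mulVec, Matrix.smul_mulVec, hquad] using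
      (Complex.le_def.mp ((hc ρ hρ.1).dotProduct_mulVec_nonneg ψ)).1
  have hupper : S * (star ψ ⬝ᵥ E ρ *ᵥ ψ).re ≤ 1 := by
    simpa only [traceR, hE.trace_apply hN, hρ.2, Complex.one_re] using
      hψ.2 (E ρ) (hE.1 ρ) (hpp.posSemidef_apply hS hρ.1)
  rw [← one_div, le_div_iff₀' hS]
  exact (mul_le_mul_of_nonneg_left hlower hS.le).trans hupper

lemma DpRel_eq_bot_of_isEmpty [IsEmpty n] (p : ℝ≥0∞) (A : Set (Mat n)) : DpRel p A N = ⊥ := by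
  refine le_bot_iff.mp (iSup₂_le fun ρ ⟨_, hρ⟩ => ?_)
  simpa [Matrix.trace] using hρ.2

end ConditionalExpectation

section Rank

lemma norm_sq_le_mul_conjTranspose_re {ι κ : Type*} [Fintype κ] (A : Matrix ι κ ℂ) (i : ι)
    (j : κ) : ‖A i j‖ ^ 2 ≤ ((A * Aᴴ) i i).re := by
  have hdiag : ((A * Aᴴ) i i).re = ∑ k, ‖A i k‖ ^ 2 := by
    simp [Matrix.mul_apply, Complex.mul_conj, Complex.normSq_eq_norm_sq, -Complex.ofReal_pow]
  rw [hdiag]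
  exact Finset.single_le_sum (f := fun k => ‖A i k‖ ^ 2) (fun _ _ => by positivity)
    (Finset.mem_univ j)

lemma norm_trace_sq_le_card_mul_sum {ι : Type*} [Fintype ι] (A : Matrix ι ι ℂ) {d : ι → ℝ}
    (hd : ∀ i, ‖A i i‖ ^ 2 ≤ d i) :
    ‖A.trace‖ ^ 2 ≤ Fintype.card {i // d i ≠ 0} * ∑ i, d i := by
  set s := Finset.univ.filter fun i => d i ≠ 0
  have hsum : A.trace = ∑ i ∈ s, A i i := by
    refine (Finset.sum_filter_of_ne (p := fun i => d i ≠ 0) fun i _ hne h0 => hne ?_).symm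
    simpa using (hd i).trans_eq h0
  rw [hsum, Fintype.card_subtype]
  calc ‖∑ i ∈ s, A i i‖ ^ 2 ≤ (∑ i ∈ s, ‖A i i‖) ^ 2 :=
        pow_le_pow_left₀ (norm_nonneg _) (norm_sum_le _ _) 2
    _ ≤ s.card * ∑ i ∈ s, ‖A i i‖ ^ 2 := sq_sum_le_card_mul_sum_sq
    _ ≤ s.card * ∑ i, d i := by
        gcongr
        exact (Finset.sum_le_sum fun i _ => hd i).trans
          (Finset.sum_le_univ_sum_of_nonneg fun i => (sq_nonneg _).trans (hd i))

-- In an eigenbasis of `M * Mᴴ` the diagonal of `M` has at most `rank M` nonzero entries.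
lemma norm_trace_sq_le_rank_mul (M : Mat n) :
    ‖M.trace‖ ^ 2 ≤ M.rank * traceR (Mᴴ * M) := by
  have hH : (M * Mᴴ).IsHermitian := isHermitian_mul_conjTranspose_self M
  set U : Mat n := (hH.eigenvectorUnitary : Mat n)
  have hU : U * Uᴴ = 1 := Unitary.coe_mul_star_self hH.eigenvectorUnitary
  set A : Mat n := Uᴴ * M * U
  have hAA : A * Aᴴ = Uᴴ * (M * Mᴴ) * U := by
    simp only [A, conjTranspose_mul, conjTranspose_conjTranspose, mul_assoc]
    rw [← mul_assoc U, hU, one_mul]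
  have hdiag : ∀ i, ((A * Aᴴ) i i).re = hH.eigenvalues i := fun i => by
    have h := hH.conjStarAlgAut_star_eigenvectorUnitary
    rw [Unitary.conjStarAlgAut_star_apply] at h
    rw [hAA]
    simpa [U, star_eq_conjTranspose] using congrArg Complex.re (congrFun₂ h i i)
  have htrace : A.trace = M.trace := by rw [trace_mul_comm, ← mul_assoc, hU, one_mul]
  calc ‖M.trace‖ ^ 2 ≤
        Fintype.card {i // hH.eigenvalues i ≠ 0} * ∑ i, hH.eigenvalues i := by
        rw [← htrace]
        exact norm_trace_sq_le_card_mul_sum A fun i =>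
          (norm_sq_le_mul_conjTranspose_re A i i).trans_eq (hdiag i)
    _ = M.rank * traceR (Mᴴ * M) := by
        rw [← hH.rank_eq_card_non_zero_eigs, rank_self_mul_conjTranspose, traceR, trace_mul_comm,
          hH.trace_eq_sum_eigenvalues]
        simp

end Rank

section BlockVectors

variable {K : Type*} [Fintype K] {m l : K → Type*} [∀ k, Fintype (m k)] [∀ k, Fintype (l k)]

/-- The coordinates of `v` in the `k`-th block `ℂ^{m_k} ⊗ ℂ^{l_k}`, as an `m_k × l_k` matrix. -/
def blockMat (v : (Σ k, m k × l k) → ℂ) (k : K) : Matrix (m k) (l k) ℂ :=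
  of fun a b => v ⟨k, a, b⟩

lemma star_dotProduct_eq_sum_trace (v w : (Σ k, m k × l k) → ℂ) :
    star v ⬝ᵥ w = ∑ k, ((blockMat v k)ᴴ * blockMat w k).trace := by
  simp only [dotProduct, Fintype.sum_sigma, Fintype.sum_prod_type, Matrix.trace, diag_apply,
    Matrix.mul_apply, conjTranspose_apply, Pi.star_apply, blockMat, of_apply]
  exact Finset.sum_congr rfl fun k _ => Finset.sum_comm

variable (m l) in
/-- The index `∑_k min(l_k, m_k) l_k` of `⊕_k M_{m_k} ⊗ ℂ1_{l_k}`. -/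
def blockIndex : ℝ :=
  ∑ k, (min (Fintype.card (l k)) (Fintype.card (m k)) : ℝ) * Fintype.card (l k)

lemma blockIndex_pos [Nonempty (Σ k, m k × l k)] : 0 < blockIndex m l := by
  obtain ⟨k, a, b⟩ := ‹Nonempty (Σ k, m k × l k)›
  refine Finset.sum_pos' (fun k _ => by positivity) ⟨k, Finset.mem_univ k, ?_⟩
  have ha : 0 < Fintype.card (m k) := Fintype.card_pos_iff.mpr ⟨a⟩
  have hb : 0 < Fintype.card (l k) := Fintype.card_pos_iff.mpr ⟨b⟩
  positivity

lemma blockIndex_le_sum_sq : blockIndex m l ≤ ∑ k, (Fintype.card (l k) : ℝ) ^ 2 := by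
  refine Finset.sum_le_sum fun k _ => ?_
  rw [sq]
  exact mul_le_mul_of_nonneg_right (min_le_left _ _) (Nat.cast_nonneg _)

lemma blockIndex_eq_sum_sq (h : ∀ k, Fintype.card (l k) ≤ Fintype.card (m k)) :
    blockIndex m l = ∑ k, (Fintype.card (l k) : ℝ) ^ 2 := by
  refine Finset.sum_congr rfl fun k _ => ?_
  rw [min_eq_left (Nat.cast_le.mpr (h k)), sq]

lemma norm_star_dotProduct_sq_le_blockIndex_mul [∀ k, DecidableEq (l k)]
    (v w : (Σ k, m k × l k) → ℂ) :
    ‖star w ⬝ᵥ v‖ ^ 2 ≤ blockIndex m l * ∑ k, (Fintype.card (l k) : ℝ)⁻¹ *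
      traceR (((blockMat w k)ᴴ * blockMat v k)ᴴ * ((blockMat w k)ᴴ * blockMat v k)) := by
  set M : ∀ k, Mat (l k) := fun k => (blockMat w k)ᴴ * blockMat v k
  have hM : ∀ k, 0 ≤ traceR ((M k)ᴴ * M k) := fun k =>
    (Complex.le_def.mp (posSemidef_conjTranspose_mul_self (M k)).trace_nonneg).1
  have hrank : ∀ k, ((M k).rank : ℝ) ≤ min (Fintype.card (l k)) (Fintype.card (m k)) := fun k => by
    exact_mod_cast le_min (M k).rank_le_card_width
      ((rank_mul_le_right _ _).trans (rank_le_card_height _))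
  have hblock : ∀ k, ‖(M k).trace‖ ^ 2 ≤
      (min (Fintype.card (l k)) (Fintype.card (m k)) : ℝ) * Fintype.card (l k) *
        ((Fintype.card (l k) : ℝ)⁻¹ * traceR ((M k)ᴴ * M k)) := fun k => by
    rcases isEmpty_or_nonempty (l k) with hl | hl
    · simp [Matrix.trace]
    calc ‖(M k).trace‖ ^ 2 ≤ (M k).rank * traceR ((M k)ᴴ * M k) := norm_trace_sq_le_rank_mul _
      _ ≤ min (Fintype.card (l k)) (Fintype.card (m k)) * traceR ((M k)ᴴ * M k) :=
        mul_le_mul_of_nonneg_right (hrank k) (hM k)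
      _ = _ := by
        push_cast
        field_simp
  rw [star_dotProduct_eq_sum_trace]
  calc ‖∑ k, (M k).trace‖ ^ 2 ≤ (∑ k, ‖(M k).trace‖) ^ 2 :=
        pow_le_pow_left₀ (norm_nonneg _) (norm_sum_le _ _) 2
    _ ≤ _ := Finset.sum_sq_le_sum_mul_sum_of_sq_le_mul _ (fun k _ => by positivity)
        (fun k _ => mul_nonneg (by positivity) (hM k)) fun k _ => hblock k

end BlockVectors

section BlockAlgebra

open scoped Kronecker

variable {K : Type*} [Fintype K] [DecidableEq K] {m l : K → Type*}
  [∀ k, Fintype (m k)] [∀ k, DecidableEq (m k)] [∀ k, Fintype (l k)] [∀ k, DecidableEq (l k)]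

variable (l) in
/-- The embedding `⊕_k M_{m_k} → ⊕_k M_{m_k} ⊗ ℂ1_{l_k}`, `y ↦ ⊕_k y_k ⊗ 1`. -/
def blockEmbed : (∀ k, Mat (m k)) →ₗ[ℂ] Mat (Σ k, m k × l k) where
  toFun y := blockDiagonal' fun k => y k ⊗ₖ (1 : Mat (l k))
  map_add' y z := by
    rw [← blockDiagonal'_add]
    exact congrArg blockDiagonal' (funext fun k => add_kronecker (y k) (z k) 1)
  map_smul' c y := by
    rw [RingHom.id_apply, ← blockDiagonal'_smul]
    exact congrArg blockDiagonal' (funext fun k => smul_kronecker c (y k) 1)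

variable (m l) in
/-- The block diagonal *-subalgebra `⊕_k M_{m_k} ⊗ ℂ1_{l_k}`, for arbitrary finite index types. -/
def blockAlgebra : Submodule ℂ (Mat (Σ k, m k × l k)) := LinearMap.range (blockEmbed l)

lemma blockEmbed_apply (y : ∀ k, Mat (m k)) :
    blockEmbed l y = blockDiagonal' fun k => y k ⊗ₖ (1 : Mat (l k)) := rfl

lemma blockEmbed_apply_same (y : ∀ k, Mat (m k)) (k : K) (i j : m k × l k) :
    blockEmbed l y ⟨k, i⟩ ⟨k, j⟩ = y k i.1 j.1 * (1 : Mat (l k)) i.2 j.2 := by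
  rw [blockEmbed_apply, blockDiagonal'_apply_eq, kronecker_apply]

lemma blockEmbed_apply_ne (y : ∀ k, Mat (m k)) {k k' : K} (h : k ≠ k') (i : m k × l k)
    (j : m k' × l k') : blockEmbed l y ⟨k, i⟩ ⟨k', j⟩ = 0 := by
  rw [blockEmbed_apply, blockDiagonal'_apply_ne _ _ _ h]

lemma blockEmbed_conjTranspose (y : ∀ k, Mat (m k)) :
    (blockEmbed l y)ᴴ = blockEmbed l fun k => (y k)ᴴ := by
  simp [blockEmbed_apply, blockDiagonal'_conjTranspose, conjTranspose_kronecker]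

lemma one_mem_blockAlgebra : 1 ∈ blockAlgebra m l :=
  ⟨fun _ => 1, by simp [blockEmbed_apply, ← Pi.one_def]⟩

lemma blockMat_blockEmbed_mulVec (y : ∀ k, Mat (m k)) (v : (Σ k, m k × l k) → ℂ) (k : K) :
    blockMat (blockEmbed l y *ᵥ v) k = y k * blockMat v k := by
  ext a b
  rw [blockMat, of_apply, mulVec, dotProduct, Fintype.sum_sigma, Finset.sum_eq_single k]
  · simp [blockEmbed_apply_same, Fintype.sum_prod_type, Matrix.mul_apply, one_apply, blockMat]
  · intro k' _ hk'
    simp [blockEmbed_apply_ne _ hk'.symm]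
  · simp

lemma star_dotProduct_blockEmbed_mulVec (y : ∀ k, Mat (m k)) (v : (Σ k, m k × l k) → ℂ) :
    star v ⬝ᵥ blockEmbed l y *ᵥ v =
      ∑ k, ((blockMat v k)ᴴ * (y k * blockMat v k)).trace := by
  simp only [star_dotProduct_eq_sum_trace, blockMat_blockEmbed_mulVec]

/-- The partial trace of the `k`-th diagonal block over its multiplicity space `ℂ^{l_k}`. -/
def blockTrace (k : K) : Mat (Σ k, m k × l k) →ₗ[ℂ] Mat (m k) where
  toFun X := of fun a a' => ∑ b, X ⟨k, a, b⟩ ⟨k, a', b⟩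
  map_add' X Y := by
    ext
    simp [Finset.sum_add_distrib]
  map_smul' c X := by
    ext
    simp [Finset.mul_sum]

lemma blockTrace_apply (X : Mat (Σ k, m k × l k)) (k : K) (a a' : m k) :
    blockTrace k X a a' = ∑ b, X ⟨k, a, b⟩ ⟨k, a', b⟩ := rfl

lemma blockTrace_vecMulVec (v : (Σ k, m k × l k) → ℂ) (k : K) :
    blockTrace k (vecMulVec v (star v)) = blockMat v k * (blockMat v k)ᴴ := by
  ext a a'
  simp [blockTrace_apply, vecMulVec_apply, Matrix.mul_apply, blockMat]

lemma blockTrace_blockEmbed (y : ∀ k, Mat (m k)) (k : K) :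
    blockTrace k (blockEmbed l y) = (Fintype.card (l k) : ℂ) • y k := by
  ext a a'
  simp [blockTrace_apply, blockEmbed_apply_same]

lemma blockTrace_conjTranspose (X : Mat (Σ k, m k × l k)) (k : K) :
    blockTrace k Xᴴ = (blockTrace k X)ᴴ := by
  ext a a'
  simp [blockTrace_apply]

lemma trace_mul_blockEmbed (X : Mat (Σ k, m k × l k)) (y : ∀ k, Mat (m k)) :
    (X * blockEmbed l y).trace = ∑ k, (blockTrace k X * y k).trace := by
  have hentry : ∀ (k : K) (a : m k) (b : l k), (X * blockEmbed l y) ⟨k, a, b⟩ ⟨k, a, b⟩ =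
      ∑ a', X ⟨k, a, b⟩ ⟨k, a', b⟩ * y k a' a := fun k a b => by
    rw [Matrix.mul_apply, Fintype.sum_sigma, Finset.sum_eq_single k]
    · simp [blockEmbed_apply_same, Fintype.sum_prod_type, one_apply]
    · intro k' _ hk'
      simp [blockEmbed_apply_ne _ hk']
    · simp
  simp only [Matrix.trace, diag_apply, Fintype.sum_sigma, Fintype.sum_prod_type, hentry,
    Matrix.mul_apply, blockTrace_apply, Finset.sum_mul]
  exact Finset.sum_congr rfl fun k _ => Finset.sum_congr rfl fun a _ => by rw [Finset.sum_comm]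

/-- The trace preserving conditional expectation onto `blockAlgebra m l`: the normalized partial
trace over the multiplicity space of each block. -/
def blockCondExp : Mat (Σ k, m k × l k) →ₗ[ℂ] Mat (Σ k, m k × l k) :=
  blockEmbed l ∘ₗ LinearMap.pi fun k => (Fintype.card (l k) : ℂ)⁻¹ • blockTrace k

lemma blockCondExp_apply (X : Mat (Σ k, m k × l k)) :
    blockCondExp X = blockEmbed l fun k => (Fintype.card (l k) : ℂ)⁻¹ • blockTrace k X := rfl

lemma blockCondExp_blockEmbed (y : ∀ k, Mat (m k)) :
    blockCondExp (blockEmbed l y) = blockEmbed l y := by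
  simp only [blockCondExp_apply, blockTrace_blockEmbed]
  rw [blockEmbed_apply, blockEmbed_apply]
  refine congrArg blockDiagonal' (funext fun k => ?_)
  rcases isEmpty_or_nonempty (l k) with hl | hl
  · ext i
    exact hl.elim i.2
  · rw [inv_smul_smul₀ (by simp)]

lemma blockTrace_blockCondExp (X : Mat (Σ k, m k × l k)) (k : K) :
    blockTrace k (blockCondExp X) = blockTrace k X := by
  rw [blockCondExp_apply, blockTrace_blockEmbed]
  rcases isEmpty_or_nonempty (l k) with hl | hl
  · ext a a'
    simp [blockTrace_apply]
  · rw [smul_inv_smul₀ (by simp)]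

lemma blockCondExp_isCondExp :
    IsCondExp (blockAlgebra m l) (blockCondExp (m := m) (l := l)) := by
  refine ⟨fun X => ⟨_, rfl⟩, ?_, ?_⟩
  · rintro _ ⟨y, rfl⟩
    exact blockCondExp_blockEmbed y
  · rintro X _ ⟨y, rfl⟩
    simp only [trace_mul_blockEmbed, blockTrace_conjTranspose, blockTrace_blockCondExp]

lemma blockCondExp_isHermitian {X : Mat (Σ k, m k × l k)} (hX : X.IsHermitian) :
    (blockCondExp X).IsHermitian := by
  rw [IsHermitian, blockCondExp_apply, blockEmbed_conjTranspose]
  refine congrArg (blockEmbed l) (funext fun k => ?_)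
  rw [conjTranspose_smul, ← blockTrace_conjTranspose, hX.eq]
  simp

section UpperBound

lemma posSemidef_of_re_dotProduct_mulVec_nonneg {A : Mat n} (hA : A.IsHermitian)
    (h : ∀ v, 0 ≤ (star v ⬝ᵥ A *ᵥ v).re) : A.PosSemidef :=
  .of_dotProduct_mulVec_nonneg hA fun v =>
    Complex.le_def.mpr ⟨h v, (hA.im_star_dotProduct_mulVec_self v).symm⟩

lemma star_dotProduct_blockCondExp_vecMulVec_mulVec (v w : (Σ k, m k × l k) → ℂ) :
    (star v ⬝ᵥ blockCondExp (vecMulVec w (star w)) *ᵥ v).re =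
      ∑ k, (Fintype.card (l k) : ℝ)⁻¹ *
        traceR (((blockMat w k)ᴴ * blockMat v k)ᴴ * ((blockMat w k)ᴴ * blockMat v k)) := by
  rw [blockCondExp_apply, star_dotProduct_blockEmbed_mulVec, Complex.re_sum]
  refine Finset.sum_congr rfl fun k _ => ?_
  rw [blockTrace_vecMulVec, Matrix.smul_mul, Matrix.mul_smul, trace_smul, traceR,
    conjTranspose_mul, conjTranspose_conjTranspose]
  simp only [Matrix.mul_assoc]
  rw [smul_eq_mul, ← Complex.ofReal_natCast, ← Complex.ofReal_inv, Complex.re_ofReal_mul]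

lemma star_dotProduct_vecMulVec_mulVec {ι : Type*} [Fintype ι] (v w : ι → ℂ) :
    star v ⬝ᵥ vecMulVec w (star w) *ᵥ v = (‖star w ⬝ᵥ v‖ ^ 2 : ℝ) := by
  have hconj : star v ⬝ᵥ w = star (star w ⬝ᵥ v) := by
    rw [← star_dotProduct_star, star_star]
  rw [vecMulVec_mulVec, op_smul_eq_smul, dotProduct_smul, hconj, smul_eq_mul, RCLike.star_def,
    Complex.mul_conj']
  norm_cast

theorem blockCondExp_pimsnerPopaBound :
    PimsnerPopaBound (blockCondExp (m := m) (l := l)) (blockIndex m l) := by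
  refine pimsnerPopaBound_of_vecMulVec fun w => ?_
  have hw := (posSemidef_vecMulVec_self_star w).1
  refine posSemidef_of_re_dotProduct_mulVec_nonneg
    (((blockCondExp_isHermitian hw).smul (.all _)).sub hw) fun v => ?_
  rw [sub_mulVec, smul_mulVec, dotProduct_sub, dotProduct_smul, Complex.sub_re, Complex.smul_re,
    star_dotProduct_blockCondExp_vecMulVec_mulVec, star_dotProduct_vecMulVec_mulVec,
    Complex.ofReal_re, sub_nonneg]
  exact norm_star_dotProduct_sq_le_blockIndex_mul v w

end UpperBound

section Witness

lemma exists_conjTranspose_mul_self_eq_one {ι κ : Type*} [Fintype ι] [Fintype κ] [DecidableEq ι]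
    (h : Fintype.card ι ≤ Fintype.card κ) :
    ∃ V : Matrix κ ι ℂ, Vᴴ * V = 1 := by
  obtain ⟨f⟩ := Function.Embedding.nonempty_of_card_le h
  refine ⟨(1 : Mat κ).submatrix id f, ?_⟩
  rw [conjTranspose_submatrix, conjTranspose_one, ← submatrix_mul _ _ _ _ _ Function.bijective_id,
    one_mul, submatrix_one_embedding]

lemma posSemidef_one_sub_of_isIdempotentElem {P : Mat n} (hP : P.IsHermitian)
    (hidem : IsIdempotentElem P) : (1 - P).PosSemidef := by
  have h := posSemidef_conjTranspose_mul_self (1 - P)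
  rwa [conjTranspose_sub, conjTranspose_one, hP.eq, hidem.one_sub.eq] at h

lemma exists_contraction_trace_eq_min (ι κ : Type*) [Fintype ι] [Fintype κ] [DecidableEq ι] :
    ∃ V : Matrix ι κ ℂ, (1 - V * Vᴴ).PosSemidef ∧
      (Vᴴ * V).trace = (min (Fintype.card κ : ℝ) (Fintype.card ι) : ℝ) := by
  rcases le_total (Fintype.card κ) (Fintype.card ι) with h | h
  · obtain ⟨V, hV⟩ := exists_conjTranspose_mul_self_eq_one h
    refine ⟨V, posSemidef_one_sub_of_isIdempotentElem (isHermitian_mul_conjTranspose_self V) ?_, ?_⟩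
    · rw [IsIdempotentElem, ← Matrix.mul_assoc, Matrix.mul_assoc V, hV, Matrix.mul_one]
    · rw [hV, trace_one, min_eq_left (by exact_mod_cast h), Complex.ofReal_natCast]
  · obtain ⟨V, hV⟩ := exists_conjTranspose_mul_self_eq_one h
    refine ⟨Vᴴ, ?_, ?_⟩
    · simp [hV, PosSemidef.zero]
    · rw [trace_mul_comm, conjTranspose_conjTranspose, hV, trace_one,
        min_eq_right (by exact_mod_cast h), Complex.ofReal_natCast]

lemma posSemidef_of_posSemidef_blockEmbed {y : ∀ k, Mat (m k)} (h : (blockEmbed l y).PosSemidef)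
    (k : K) [Nonempty (l k)] : (y k).PosSemidef := by
  obtain ⟨b⟩ := ‹Nonempty (l k)›
  convert h.submatrix fun a => ⟨k, a, b⟩
  ext a a'
  simp [blockEmbed_apply_same]

lemma traceR_blockEmbed (y : ∀ k, Mat (m k)) :
    traceR (blockEmbed l y) = ∑ k, Fintype.card (l k) * traceR (y k) := by
  simp [traceR, blockEmbed_apply, trace_blockDiagonal', trace_kronecker, mul_comm]

lemma mul_re_star_dotProduct_mulVec_le_traceR {S : ℝ} {ψ : (Σ k, m k × l k) → ℂ}
    (hψ : ∀ k, ((Fintype.card (l k) : ℝ) • (1 : Mat (m k)) -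
      S • (blockMat ψ k * (blockMat ψ k)ᴴ)).PosSemidef)
    {σ : Mat (Σ k, m k × l k)} (hσN : σ ∈ blockAlgebra m l) (hσ : σ.PosSemidef) :
    S * (star ψ ⬝ᵥ σ *ᵥ ψ).re ≤ traceR σ := by
  obtain ⟨y, rfl⟩ := hσN
  rw [star_dotProduct_blockEmbed_mulVec, traceR_blockEmbed, Complex.re_sum, Finset.mul_sum]
  refine Finset.sum_le_sum fun k _ => ?_
  rcases isEmpty_or_nonempty (l k) with hl | hl
  · simp [Matrix.trace]
  have h := traceR_mul_nonneg (posSemidef_of_posSemidef_blockEmbed hσ k) (hψ k)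
  rw [mul_sub, Matrix.mul_smul, Matrix.mul_smul, mul_one, traceR_sub, traceR_smul, traceR_smul,
    sub_nonneg, ← Matrix.mul_assoc] at h
  rwa [trace_mul_comm]

-- The witness is a direct sum of maximally entangled vectors of rank `min(l_k, m_k)`, the `k`-th
-- one weighted so that its partial trace is `l_k / S` times a projection.
theorem exists_isIndexWitness_blockAlgebra [Nonempty (Σ k, m k × l k)] :
    ∃ ψ, IsIndexWitness (blockAlgebra m l : Set (Mat (Σ k, m k × l k))) (blockIndex m l) ψ := by
  have hS : 0 < blockIndex m l := blockIndex_pos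
  choose V hV htrace using fun k => exists_contraction_trace_eq_min (m k) (l k)
  let c : K → ℝ := fun k => √(Fintype.card (l k) / blockIndex m l)
  have hc : ∀ k, c k * c k = Fintype.card (l k) / blockIndex m l := fun k =>
    Real.mul_self_sqrt (by positivity)
  let ψ : (Σ k, m k × l k) → ℂ := fun i => c i.1 * V i.1 i.2.1 i.2.2
  have hψ : ∀ k, blockMat ψ k = c k • V k := fun k => by
    ext a b
    simp [blockMat, ψ]
  refine ⟨ψ, ?_, fun σ hσN hσ => mul_re_star_dotProduct_mulVec_le_traceR (fun k => ?_) hσN hσ⟩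
  · have hblock : ∀ k, ((blockMat ψ k)ᴴ * blockMat ψ k).trace =
        (((min (Fintype.card (l k)) (Fintype.card (m k)) : ℝ) * Fintype.card (l k) /
          blockIndex m l : ℝ) : ℂ) := fun k => by
      rw [hψ, conjTranspose_smul, star_trivial, Matrix.smul_mul, Matrix.mul_smul, smul_smul, hc,
        trace_smul, htrace, Complex.real_smul, ← Complex.ofReal_mul, div_mul_eq_mul_div, mul_comm]
    simp only [star_dotProduct_eq_sum_trace, hblock]
    rw [← Complex.ofReal_sum, ← Finset.sum_div]
    exact (congrArg Complex.ofReal (div_self hS.ne')).trans Complex.ofReal_one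
  · rw [hψ, conjTranspose_smul, star_trivial, Matrix.smul_mul, Matrix.mul_smul, smul_smul,
      smul_smul, mul_assoc, hc, mul_div_cancel₀ _ hS.ne', ← smul_sub]
    exact (hV k).smul (Nat.cast_nonneg _)

end Witness

variable [Nonempty (Σ k, m k × l k)]

theorem DpRel_blockAlgebra :
    DpRel 1 Set.univ (blockAlgebra m l : Set (Mat (Σ k, m k × l k))) =
      (Real.log (blockIndex m l) : ℝ) := by
  obtain ⟨ψ, hψ⟩ := exists_isIndexWitness_blockAlgebra (m := m) (l := l)
  exact le_antisymm
    (blockCondExp_pimsnerPopaBound.DpRel_one_le_log blockCondExp_isCondExp one_mem_blockAlgebra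
      blockIndex_pos)
    (hψ.log_le_DpRel_one blockIndex_pos)

theorem ppIndex_blockAlgebra {E : Mat (Σ k, m k × l k) →ₗ[ℂ] Mat (Σ k, m k × l k)}
    (hE : IsCondExp (blockAlgebra m l) E) : ppIndex E = (blockIndex m l)⁻¹ := by
  obtain ⟨ψ, hψ⟩ := exists_isIndexWitness_blockAlgebra (m := m) (l := l)
  rw [hE.unique blockCondExp_isCondExp]
  exact blockCondExp_isCondExp.ppIndex_eq_inv one_mem_blockAlgebra blockIndex_pos
    blockCondExp_pimsnerPopaBound hψ

end BlockAlgebra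

section Reindexing

lemma trace_submatrix_equiv {ι κ α : Type*} [Fintype ι] [Fintype κ] [AddCommMonoid α]
    (e : ι ≃ κ) (A : Matrix κ κ α) : (A.submatrix e e).trace = A.trace :=
  Equiv.sum_comp e fun i => A i i

variable {ι : Type*} [Fintype ι] [DecidableEq ι]

lemma cfc_submatrix (e : ι ≃ n) (f : ℝ → ℝ) {A : Mat n} (hA : A.IsHermitian) :
    cfc f (A.submatrix e e) = (cfc f A).submatrix e e := by
  let φ : Mat n →⋆ₐ[ℝ] Mat ι :=
    { toFun := fun X => X.submatrix e e
      map_one' := submatrix_one_equiv e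
      map_mul' := fun X Y => (submatrix_mul_equiv X Y e e e).symm
      map_zero' := rfl
      map_add' := fun _ _ => rfl
      commutes' := fun r => by
        ext i j
        simp [Matrix.algebraMap_matrix_apply]
      map_star' := fun _ => rfl }
  have hφ : Continuous φ := by
    change Continuous fun X : Mat n => X.submatrix e e
    fun_prop
  exact (StarAlgHom.map_cfc φ f A (continuousOn_spectrum A f) hφ hA (hA.submatrix e)).symm

lemma traceR_submatrix (e : ι ≃ n) (A : Mat n) : traceR (A.submatrix e e) = traceR A := by
  rw [traceR, trace_submatrix_equiv, traceR]

lemma IsDensity.submatrix (e : ι ≃ n) {A : Mat n} (h : IsDensity A) :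
    IsDensity (A.submatrix e e) :=
  ⟨h.1.submatrix e, (trace_submatrix_equiv e A).trans h.2⟩

lemma suppLe.submatrix (e : ι ≃ n) {ρ σ : Mat n} (h : suppLe ρ σ) :
    suppLe (ρ.submatrix e e) (σ.submatrix e e) := by
  intro v hv
  rw [submatrix_mulVec_equiv] at hv ⊢
  have hker : σ *ᵥ (v ∘ e.symm) = 0 := by
    ext i
    simpa using congrFun hv (e.symm i)
  rw [h _ hker]
  rfl

lemma suppLe_submatrix_iff (e : ι ≃ n) {ρ σ : Mat n} :
    suppLe (ρ.submatrix e e) (σ.submatrix e e) ↔ suppLe ρ σ :=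
  ⟨fun h => by simpa [submatrix_submatrix] using h.submatrix e.symm, fun h => h.submatrix e⟩

lemma DU_submatrix (e : ι ≃ n) {ρ σ : Mat n} (hρ : ρ.IsHermitian) (hσ : σ.IsHermitian) :
    DU (ρ.submatrix e e) (σ.submatrix e e) = DU ρ σ := by
  rw [DU, DU, traceR_sub, traceR_sub]
  simp only [suppLe_submatrix_iff, mlog, cfc_submatrix e _ hρ, cfc_submatrix e _ hσ,
    submatrix_mul_equiv, traceR_submatrix]

lemma DpRel_one_le_of_submatrix_mem (e : ι ≃ n) {S : Set (Mat ι)} {T : Set (Mat n)}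
    (h : ∀ X ∈ S, X.submatrix e.symm e.symm ∈ T) :
    DpRel 1 Set.univ T ≤ DpRel 1 Set.univ S := by
  refine iSup₂_le fun ρ ⟨_, hρ⟩ => ?_
  refine le_trans ?_ (le_iSup₂ (ρ.submatrix e e) ⟨Set.mem_univ _, hρ.submatrix e⟩)
  refine le_iInf₂ fun σ ⟨hσS, hσ⟩ => ?_
  have hσ' := hσ.submatrix e.symm
  refine (iInf₂_le (σ.submatrix e.symm e.symm) ⟨h σ hσS, hσ'⟩).trans_eq ?_
  rw [Dp_one, Dp_one, ← DU_submatrix e hρ.1.1 hσ'.1.1]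
  simp [submatrix_submatrix]

lemma DpRel_one_eq_of_submatrix_mem_iff (e : ι ≃ n) {S : Set (Mat ι)} {T : Set (Mat n)}
    (h : ∀ X, X.submatrix e.symm e.symm ∈ T ↔ X ∈ S) :
    DpRel 1 Set.univ S = DpRel 1 Set.univ T := by
  refine le_antisymm (DpRel_one_le_of_submatrix_mem e.symm fun X hX => ?_)
    (DpRel_one_le_of_submatrix_mem e fun X => (h X).mpr)
  rw [← h]
  simpa [submatrix_submatrix] using hX

end Reindexing

section Amplification

open scoped Kronecker

lemma eq_sum_single_kronecker {ι : Type*} [Fintype ι] [DecidableEq ι] (Z : Mat (ι × n)) :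
    Z = ∑ s, ∑ t, single s t (1 : ℂ) ⊗ₖ Z.submatrix (Prod.mk s) (Prod.mk t) := by
  ext ⟨s, i⟩ ⟨t, j⟩
  simp [Matrix.sum_apply, single_apply, ite_and]

lemma mem_tensorSpan_univ_iff {ι : Type*} [Fintype ι] [DecidableEq ι] (N : Submodule ℂ (Mat n))
    (Z : Mat (ι × n)) :
    Z ∈ tensorSpan Set.univ (N : Set (Mat n)) ↔
      ∀ s t, Z.submatrix (Prod.mk s) (Prod.mk t) ∈ N := by
  refine ⟨fun hZ s t => ?_, fun hZ => ?_⟩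
  · rw [tensorSpan, SetLike.mem_coe] at hZ
    induction hZ using Submodule.span_induction with
    | mem z hz =>
      obtain ⟨x, -, y, hy, rfl⟩ := hz
      exact N.smul_mem (x s t) hy
    | zero => exact N.zero_mem
    | add z w _ _ hz hw => exact N.add_mem hz hw
    | smul c z _ hz => exact N.smul_mem c hz
  · rw [eq_sum_single_kronecker Z]
    exact Submodule.sum_mem _ fun s _ => Submodule.sum_mem _ fun t _ =>
      Submodule.subset_span ⟨_, Set.mem_univ _, _, hZ s t, rfl⟩

/-- The reindexing `q × Σ_k (m_k × l_k) ≃ Σ_k ((q × m_k) × l_k)` which identifies the amplification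
`M_q ⊗ ⊕_k (M_{m_k} ⊗ ℂ1)` with `⊕_k (M_{q × m_k} ⊗ ℂ1)`. -/
def amplifyEquiv {K : Type*} (q : Type*) (m l : K → Type*) :
    q × (Σ k, m k × l k) ≃ Σ k, (q × m k) × l k where
  toFun x := ⟨x.2.1, (x.1, x.2.2.1), x.2.2.2⟩
  invFun x := (x.2.1.1, ⟨x.1, x.2.1.2, x.2.2⟩)

variable {K : Type*} [Fintype K] [DecidableEq K] {m l : K → Type*}
  [∀ k, Fintype (m k)] [∀ k, DecidableEq (m k)] [∀ k, Fintype (l k)] [∀ k, DecidableEq (l k)]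

lemma submatrix_amplifyEquiv_mem_iff {q : Type*} [Fintype q] [DecidableEq q]
    (Z : Mat (q × (Σ k, m k × l k))) :
    Z.submatrix (amplifyEquiv q m l).symm (amplifyEquiv q m l).symm ∈
        blockAlgebra (fun k => q × m k) l ↔
      Z ∈ tensorSpan Set.univ (blockAlgebra m l : Set (Mat (Σ k, m k × l k))) := by
  rw [mem_tensorSpan_univ_iff]
  constructor
  · rintro ⟨y, hy⟩ s t
    refine ⟨fun k => (y k).submatrix (Prod.mk s) (Prod.mk t), ?_⟩
    ext ⟨k, i⟩ ⟨k', j⟩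
    refine Eq.trans ?_ (congrFun₂ hy ⟨k, (s, i.1), i.2⟩ ⟨k', (t, j.1), j.2⟩)
    rcases eq_or_ne k k' with rfl | hk
    · simp [blockEmbed_apply_same]
    · simp [blockEmbed_apply_ne _ hk]
  · intro hZ
    choose y hy using hZ
    refine ⟨fun k => of fun i j => y i.1 j.1 k i.2 j.2, ?_⟩
    ext ⟨k, ⟨s, a⟩, b⟩ ⟨k', ⟨t, a'⟩, b'⟩
    refine Eq.trans ?_ (congrFun₂ (hy s t) ⟨k, a, b⟩ ⟨k', a', b'⟩)
    rcases eq_or_ne k k' with rfl | hk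
    · simp [blockEmbed_apply_same]
    · simp [blockEmbed_apply_ne _ hk]

lemma DpRel_tensorSpan_blockAlgebra (q : Type*) [Fintype q] [DecidableEq q] :
    DpRel 1 Set.univ (tensorSpan (Set.univ : Set (Mat q))
        (blockAlgebra m l : Set (Mat (Σ k, m k × l k)))) =
      DpRel 1 Set.univ (blockAlgebra (fun k => q × m k) l :
        Set (Mat (Σ k, (q × m k) × l k))) :=
  DpRel_one_eq_of_submatrix_mem_iff (amplifyEquiv q m l) submatrix_amplifyEquiv_mem_iff

theorem DpCb_blockAlgebra [∀ k, Nonempty (m k)] [Nonempty (Σ k, m k × l k)] :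
    DpCb 1 (blockAlgebra m l : Set (Mat (Σ k, m k × l k))) =
      (Real.log (∑ k, (Fintype.card (l k) : ℝ) ^ 2) : ℝ) := by
  have hne : ∀ q, 0 < q → Nonempty (Σ k, (Fin q × m k) × l k) := fun q hq =>
    have : NeZero q := ⟨hq.ne'⟩
    (amplifyEquiv (Fin q) m l).nonempty_congr.mp inferInstance
  apply le_antisymm
  · refine iSup_le fun q => ?_
    rcases q.eq_zero_or_pos with rfl | hq
    · exact (DpRel_eq_bot_of_isEmpty _ _).trans_le bot_le
    have := hne q hq
    rw [DpRel_tensorSpan_blockAlgebra, DpRel_blockAlgebra, EReal.coe_le_coe_iff]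
    exact Real.log_le_log blockIndex_pos blockIndex_le_sum_sq
  · set q := ∑ k, Fintype.card (l k)
    have hle : ∀ k, Fintype.card (l k) ≤ q := fun k =>
      Finset.single_le_sum (f := fun k => Fintype.card (l k)) (fun _ _ => Nat.zero_le _)
        (Finset.mem_univ k)
    obtain ⟨k, -, b⟩ := ‹Nonempty (Σ k, m k × l k)›
    have := hne q ((Fintype.card_pos_iff.mpr ⟨b⟩).trans_le (hle k))
    have hcard : ∀ k, Fintype.card (l k) ≤ Fintype.card (Fin q × m k) := fun k => by
      rw [Fintype.card_prod, Fintype.card_fin]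
      exact (hle k).trans (Nat.le_mul_of_pos_right _ Fintype.card_pos)
    refine le_trans ?_ (le_iSup _ q)
    rw [DpRel_tensorSpan_blockAlgebra, DpRel_blockAlgebra, blockIndex_eq_sum_sq hcard]

end Amplification

lemma blockEmbed_fin_apply {K : Type*} [Fintype K] [DecidableEq K] {nn ll : K → ℕ}
    (y : ∀ k, Mat (Fin (nn k))) (i j : Σ k, Fin (nn k) × Fin (ll k)) :
    blockEmbed (fun k => Fin (ll k)) y i j =
      if h : i.1 = j.1 then
        y j.1 (Fin.cast (congrArg nn h) i.2.1) j.2.1 *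
          (if Fin.cast (congrArg ll h) i.2.2 = j.2.2 then 1 else 0)
      else 0 := by
  obtain ⟨k, i⟩ := i
  obtain ⟨k', j⟩ := j
  rcases eq_or_ne k k' with rfl | hk
  · simp [blockEmbed_apply_same, one_apply]
  · simp [blockEmbed_apply_ne _ hk, hk]

lemma blockAlg_eq_blockAlgebra (K : Type*) [Fintype K] [DecidableEq K] (nn ll : K → ℕ) :
    blockAlg K nn ll = blockAlgebra (fun k => Fin (nn k)) (fun k => Fin (ll k)) := by
  ext X
  refine exists_congr fun y => ?_
  simp only [← blockEmbed_fin_apply, eq_comm (b := X), ← Matrix.ext_iff]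

/-- for `N = ⊕_k (M_{n_k} ⊗ ℂ1_{l_k}) ⊆ M_m`, `m = Σ_k n_k l_k`,
one has `-log λ(M_m : N) = D(M_m‖N) = log Σ_k min(l_k,n_k)·l_k` and
`D_cb(M_m‖N) = log Σ_k l_k²`. -/
theorem statement12 (K : Type) [Fintype K] [DecidableEq K] [Nonempty K]
    (nn ll : K → ℕ) (hnn : ∀ k, 0 < nn k) (hll : ∀ k, 0 < ll k)
    (E : Mat ((k : K) × (Fin (nn k) × Fin (ll k))) →ₗ[ℂ]
          Mat ((k : K) × (Fin (nn k) × Fin (ll k))))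
    (hE : IsCondExp (blockAlg K nn ll) E) :
    ((- Real.log (ppIndex E) : ℝ) : EReal) = DpRel 1 Set.univ (blockAlg K nn ll) ∧
    DpRel 1 Set.univ (blockAlg K nn ll)
        = ((Real.log (∑ k, (min (ll k) (nn k) : ℝ) * (ll k : ℝ)) : ℝ) : EReal) ∧
    DpCb 1 (blockAlg K nn ll)
        = ((Real.log (∑ k, (ll k : ℝ) ^ 2) : ℝ) : EReal) := by
  have hn (k : K) : Nonempty (Fin (nn k)) := ⟨⟨0, hnn k⟩⟩
  have hne : Nonempty (Σ k, Fin (nn k) × Fin (ll k)) :=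
    ⟨⟨Classical.arbitrary K, ⟨0, hnn _⟩, ⟨0, hll _⟩⟩⟩
  rw [blockAlg_eq_blockAlgebra] at hE ⊢
  have hD := DpRel_blockAlgebra (m := fun k => Fin (nn k)) (l := fun k => Fin (ll k))
  have hcb := DpCb_blockAlgebra (m := fun k => Fin (nn k)) (l := fun k => Fin (ll k))
  refine ⟨?_, ?_, ?_⟩
  · rw [ppIndex_blockAlgebra hE, Real.log_inv, neg_neg, hD]
  · simpa only [blockIndex, Fintype.card_fin] using hD
  · simpa only [Fintype.card_fin] using hcb

end GJL
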